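/- arXiv:1209.3852 — 6 statements merged into one kernel-verified Lean document; each statement's English description precedes it below -/
import Mathlib

section
/- Let Λ be an abelian group, K a subgroup of Λ, and π : Λ → Λ⧸K the quotient map. Regard the group of all functions Λ → ℤ as a module over the group ring ℤ[Λ], where a finitely supported function f acts by convolution: (f • Φ)(λ) = Σ_{μ ∈ supp f} f(μ) · Φ(λ − μ). Then a function Φ : Λ → ℤ belongs to the ℤ[Λ]-submodule of functions Λ → ℤ generated by the functions whose support is contained in K if and only if the image π(supp Φ) of the support of Φ in Λ⧸K is finite. -/
/-!
A finite sum of convolutions `f • Ψ` with `Ψ` supported in `s` is supported in a finite union of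
translates of `s`, because `supp (f • Ψ) ⊆ supp f + supp Ψ`. Conversely, a function supported in
such a union can be cut along the translates, and a function supported in the single translate
`μ + s` is the convolution of the point mass at `μ` with a function supported in `s`. When `s` is
a subgroup `K`, its translates are the points of `Λ ⧸ K`.
-/

/-- The convolution action of the group ring `ℤ[Λ]` (finitely supported functions
`Λ →₀ ℤ`) on the module of all functions `Λ → ℤ`:
`(f • Φ) λ = Σ_{μ ∈ supp f} f μ * Φ (λ - μ)`. -/
def convSMul {Λ : Type*} [AddCommGroup Λ] (f : Λ →₀ ℤ) (Φ : Λ → ℤ) : Λ → ℤ :=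
  fun l => ∑ μ ∈ f.support, f μ * Φ (l - μ)

/-- The `ℤ[Λ]`-submodule of functions `Λ → ℤ` generated by the functions whose
support is contained in `s`, realized as the additive subgroup generated by all
convolutions `f • Ψ` with `Ψ` supported in `s` (this additive subgroup is
automatically stable under the convolution action, hence is the submodule
generated by these functions). -/
def convSpan {Λ : Type*} [AddCommGroup Λ] (s : Set Λ) : AddSubgroup (Λ → ℤ) :=
  AddSubgroup.closure
    {g | ∃ (f : Λ →₀ ℤ) (Ψ : Λ → ℤ), Function.support Ψ ⊆ s ∧ g = convSMul f Ψ}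

section

open Function Set
open scoped Pointwise

theorem finite_image_mk_iff_exists_subset_add {G : Type*} [AddGroup G] {K : AddSubgroup G}
    {A : Set G} :
    ((QuotientAddGroup.mk : G → G ⧸ K) '' A).Finite ↔ ∃ t : Set G, t.Finite ∧ A ⊆ t + K := by
  simp_rw [← QuotientAddGroup.preimage_image_mk_eq_add, ← image_subset_iff]
  constructor
  · intro hA
    obtain ⟨t, -, ht⟩ := exists_subset_bijOn A (QuotientAddGroup.mk : G → G ⧸ K)
    exact ⟨t, ht.finite_iff_finite.2 hA, ht.image_eq.superset⟩
  · rintro ⟨t, ht, hAt⟩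
    exact (ht.image _).subset hAt

variable {Λ : Type*} [AddCommGroup Λ] {s t : Set Λ} {Φ : Λ → ℤ}

theorem convSMul_single (μ : Λ) (n : ℤ) (Φ : Λ → ℤ) :
    convSMul (Finsupp.single μ n) Φ = fun l => n * Φ (l - μ) :=
  funext fun l => Finsupp.sum_single_index (h := fun ν m => m * Φ (l - ν)) (zero_mul _)

theorem support_convSMul_subset (f : Λ →₀ ℤ) (Φ : Λ → ℤ) :
    support (convSMul f Φ) ⊆ f.support + support Φ := by
  intro l hl
  obtain ⟨μ, hμ, hne⟩ := Finset.exists_ne_zero_of_sum_ne_zero hl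
  exact ⟨μ, hμ, l - μ, right_ne_zero_of_mul hne, add_sub_cancel μ l⟩

theorem exists_finite_support_subset_add_of_mem_convSpan (hΦ : Φ ∈ convSpan s) :
    ∃ t : Set Λ, t.Finite ∧ support Φ ⊆ t + s := by
  induction hΦ using AddSubgroup.closure_induction with
  | mem _ hg =>
    obtain ⟨f, Ψ, hΨ, rfl⟩ := hg
    exact ⟨f.support, f.support.finite_toSet,
      (support_convSMul_subset f Ψ).trans (add_subset_add_left hΨ)⟩
  | zero => exact ⟨∅, finite_empty, by simp⟩
  | add Φ₁ Φ₂ _ _ h₁ h₂ =>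
    obtain ⟨t₁, ht₁, hΦ₁⟩ := h₁
    obtain ⟨t₂, ht₂, hΦ₂⟩ := h₂
    refine ⟨t₁ ∪ t₂, ht₁.union ht₂, (support_add Φ₁ Φ₂).trans ?_⟩
    rw [union_add]
    exact union_subset_union hΦ₁ hΦ₂
  | neg Φ _ h => rwa [support_neg]

theorem mem_convSpan_of_support_subset_vadd {μ : Λ} (hΦ : support Φ ⊆ μ +ᵥ s) :
    Φ ∈ convSpan s := by
  refine AddSubgroup.subset_closure ⟨Finsupp.single μ 1, fun l => Φ (μ + l), ?_, ?_⟩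
  · exact fun l hl => vadd_mem_vadd_set_iff.1 (hΦ hl)
  · simp [convSMul_single]

theorem mem_convSpan_of_support_subset_add (ht : t.Finite) (hΦ : support Φ ⊆ t + s) :
    Φ ∈ convSpan s := by
  induction t, ht using Set.Finite.induction_on generalizing Φ with
  | empty =>
    rw [empty_add, subset_empty_iff, support_eq_empty_iff] at hΦ
    exact hΦ ▸ zero_mem _
  | @insert μ t _ _ ih =>
    rw [insert_eq, union_add, ← vadd_eq_add ({μ} : Set Λ), singleton_vadd] at hΦ
    have hcompl : support ((μ +ᵥ s)ᶜ.indicator Φ) ⊆ t + s := by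
      rw [support_indicator, inter_comm, ← sdiff_eq]
      exact sdiff_subset_iff.2 hΦ
    rw [← indicator_self_add_compl (μ +ᵥ s) Φ]
    exact add_mem (mem_convSpan_of_support_subset_vadd support_indicator_subset) (ih hcompl)

theorem mem_convSpan_iff_finite_image_support_general (s : Set Λ) (Φ : Λ → ℤ) :
    Φ ∈ convSpan s ↔ ∃ t : Set Λ, t.Finite ∧ support Φ ⊆ t + s :=
  ⟨exists_finite_support_subset_add_of_mem_convSpan,
    fun ⟨_, ht, hΦ⟩ => mem_convSpan_of_support_subset_add ht hΦ⟩

end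

/-- A function `Φ : Λ → ℤ` lies in the `ℤ[Λ]`-submodule generated by the functions
supported in a subgroup `K` if and only if the image of its support in `Λ⧸K` is
finite. -/
theorem mem_convSpan_iff_finite_image_support
    (Λ : Type*) [AddCommGroup Λ] (K : AddSubgroup Λ) (Φ : Λ → ℤ) :
    Φ ∈ convSpan (K : Set Λ) ↔
      (((QuotientAddGroup.mk' K) '' (Function.support Φ)) : Set (Λ ⧸ K)).Finite :=
  (mem_convSpan_iff_finite_image_support_general _ Φ).trans
    finite_image_mk_iff_exists_subset_add.symm
end

section
/- Let E be a finite-dimensional real inner product space and A : E → E a linear map that is skew-adjoint (⟪A x, y⟫ = −⟪x, A y⟫ for all x, y ∈ E) and bijective. Then there exists a linear map J : E → E such that: (1) J ∘ J = −id, i.e. J is a linear complex structure on E; (2) J is skew-adjoint, hence a linear isometry of E; (3) every linear map T : E → E commuting with A commutes with J (in particular J commutes with A and with every isometry of E commuting with A); (4) ⟪A x, J x⟫ > 0 for every x ≠ 0; (5) for every s ∈ [0, 1] the map s • J + (1 − s) • A is bijective. -/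
open scoped RealInnerProductSpace

/-! `J` is the factor `A|A|⁻¹` of the polar decomposition of `A`, where `|A| = (A⋆A)^{1/2}`. Since
`A⋆ = -A`, whatever commutes with `A` commutes with `|A|` and hence with `J`; in particular `J` is
again skew-adjoint, so that `J⋆J = 1` reads `J² = -1`. The operator `A⋆J = |A|` is positive
definite, that is, `⟪A x, J x⟫ > 0` for `x ≠ 0`. The pairing `⟪B x, J x⟫` is linear in `B` and
positive for `B = A` and for `B = J`, hence along the segment between them, which forces every `B`
on it to be injective. The square root is taken in the ⋆-algebra of matrices, where the continuous
functional calculus is available over `ℝ` as well as over `ℂ`. -/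

theorem commute_ringInverse {M : Type*} [MonoidWithZero M] {a b : M} (h : Commute a b) :
    Commute a (Ring.inverse b) := by
  by_cases hb : IsUnit b
  · obtain ⟨u, rfl⟩ := hb
    rw [Ring.inverse_unit]
    exact h.units_inv_right
  · rw [Ring.inverse_non_unit b hb]
    exact Commute.zero_right a

theorem map_mem_skewAdjoint_iff {F R S : Type*} [AddCommGroup R] [StarAddMonoid R]
    [AddCommGroup S] [StarAddMonoid S] [EquivLike F R S] [AddEquivClass F R S]
    [StarHomClass F R S] (φ : F) {a : R} : φ a ∈ skewAdjoint S ↔ a ∈ skewAdjoint R := by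
  rw [skewAdjoint.mem_iff, skewAdjoint.mem_iff, ← map_star, ← map_neg, EquivLike.apply_eq_iff_eq]

section UnitaryFactor

variable {R : Type*} [Ring R] [StarRing R] [TopologicalSpace R] [Algebra ℝ R]
  [ContinuousFunctionalCalculus ℝ R IsSelfAdjoint] [PartialOrder R] [StarOrderedRing R]
  [NonnegSpectrumClass ℝ R] {a : R}

/-- The factor `u` of the polar decomposition `a = u |a|` of an invertible element `a`, where
`|a| = (a⋆ a)^{1/2}`. For skew-adjoint `a` this is the paper's `a (-a²)^{-1/2}`. The inverse is
`Ring.inverse`, so `u` takes the junk value `0` when `|a|` is not invertible. -/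
noncomputable def unitaryFactor (a : R) : R := a * Ring.inverse (CFC.abs a)

theorem star_unitaryFactor (a : R) :
    star (unitaryFactor a) = Ring.inverse (CFC.abs a) * star a := by
  rw [unitaryFactor, star_mul, ← Ring.inverse_star, (CFC.abs_nonneg a).isSelfAdjoint.star_eq]

variable [IsTopologicalRing R] [T2Space R]

theorem isUnit_cfcAbs (ha : IsUnit a) : IsUnit (CFC.abs a) := by
  rw [← isUnit_pow_iff two_ne_zero, CFC.abs_sq]
  exact ha.star.mul ha

theorem star_mul_unitaryFactor (ha : IsUnit a) : star a * unitaryFactor a = CFC.abs a := by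
  rw [unitaryFactor, ← mul_assoc, ← CFC.abs_mul_abs,
    Ring.mul_inverse_cancel_right _ _ (isUnit_cfcAbs ha)]

theorem isStrictlyPositive_star_mul_unitaryFactor (ha : IsUnit a) :
    IsStrictlyPositive (star a * unitaryFactor a) := by
  rw [star_mul_unitaryFactor ha]
  exact (isUnit_cfcAbs ha).isStrictlyPositive (CFC.abs_nonneg a)

theorem star_unitaryFactor_mul_self (ha : IsUnit a) :
    star (unitaryFactor a) * unitaryFactor a = 1 := by
  rw [star_unitaryFactor, mul_assoc, star_mul_unitaryFactor ha,
    Ring.inverse_mul_cancel _ (isUnit_cfcAbs ha)]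

theorem commute_unitaryFactor {t : R} (h : Commute t a) (h_star : Commute t (star a)) :
    Commute t (unitaryFactor a) := by
  have h_abs : Commute t (CFC.abs a) := ((h_star.mul_right h).symm.cfcₙ_nnreal _).symm
  exact h.mul_right (commute_ringInverse h_abs)

theorem unitaryFactor_mem_skewAdjoint (ha : a ∈ skewAdjoint R) :
    unitaryFactor a ∈ skewAdjoint R := by
  rw [skewAdjoint.mem_iff] at ha ⊢
  have h_comm : Commute a (CFC.abs a) :=
    (Commute.refl a).cfcAbs_right (ha ▸ (Commute.refl a).neg_right)
  rw [star_unitaryFactor, ha, mul_neg, unitaryFactor, (commute_ringInverse h_comm).eq]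

theorem unitaryFactor_mul_self_of_mem_skewAdjoint (ha : a ∈ skewAdjoint R) (hu : IsUnit a) :
    unitaryFactor a * unitaryFactor a = -1 := by
  have h := star_unitaryFactor_mul_self hu
  rw [skewAdjoint.mem_iff.mp (unitaryFactor_mem_skewAdjoint ha), neg_mul] at h
  exact neg_eq_iff_eq_neg.mp h

end UnitaryFactor

section Operators

variable {𝕜 E F : Type*} [RCLike 𝕜] [NormedAddCommGroup F] [InnerProductSpace 𝕜 F]

section Segment

variable [AddCommGroup E] [Module 𝕜 E] {A B : E →ₗ[𝕜] F}

theorem injective_of_re_inner_pos (h : ∀ x, x ≠ 0 → 0 < RCLike.re (inner 𝕜 (A x) (B x))) :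
    Function.Injective A := by
  refine (injective_iff_map_eq_zero A).mpr fun x hx => ?_
  by_contra hne
  simpa [hx] using h x hne

theorem injective_segment_of_re_inner_pos
    (h : ∀ x, x ≠ 0 → 0 < RCLike.re (inner 𝕜 (A x) (B x))) {s : ℝ} (hs : s ∈ Set.Icc (0 : ℝ) 1) :
    Function.Injective ((s : 𝕜) • B + ((1 - s : ℝ) : 𝕜) • A) := by
  refine injective_of_re_inner_pos (B := B) fun x hx => ?_
  have hBx : B x ≠ 0 := fun h0 => by simpa [h0] using h x hx
  have hB : 0 < RCLike.re (inner 𝕜 (B x) (B x)) := by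
    rw [inner_self_eq_norm_sq]
    positivity
  have h_convex : 0 < s • RCLike.re (inner 𝕜 (B x) (B x)) +
      (1 - s) • RCLike.re (inner 𝕜 (A x) (B x)) :=
    convex_Ioi (0 : ℝ) hB (h x hx) hs.1 (sub_nonneg.mpr hs.2) (add_sub_cancel s 1)
  simpa only [LinearMap.add_apply, LinearMap.smul_apply, inner_add_left, inner_smul_left,
    RCLike.conj_ofReal, map_add, RCLike.re_ofReal_mul, smul_eq_mul] using h_convex

end Segment

variable [NormedAddCommGroup E] [InnerProductSpace 𝕜 E] [FiniteDimensional 𝕜 E]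

theorem mem_skewAdjoint_iff_inner {A : E →ₗ[𝕜] E} :
    A ∈ skewAdjoint (E →ₗ[𝕜] E) ↔ ∀ x y, inner 𝕜 (A x) y = -inner 𝕜 x (A y) := by
  rw [skewAdjoint.mem_iff, LinearMap.star_eq_adjoint, eq_comm (b := -A),
    LinearMap.eq_adjoint_iff]
  simp only [LinearMap.neg_apply, inner_neg_left, neg_eq_iff_eq_neg]

theorem re_inner_star_mul_self_pos {Q : E →ₗ[𝕜] E} (hQ : IsUnit Q) {x : E} (hx : x ≠ 0) :
    0 < RCLike.re (inner 𝕜 x ((star Q * Q) x)) := by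
  have hQx : Q x ≠ 0 :=
    (map_ne_zero_iff Q ((Module.End.isUnit_iff Q).mp hQ).injective).mpr hx
  rw [Module.End.mul_apply, LinearMap.star_eq_adjoint, LinearMap.adjoint_inner_right,
    inner_self_eq_norm_sq]
  positivity

open scoped MatrixOrder in
theorem re_inner_pos_of_isStrictlyPositive_toMatrixOrthonormal {ι : Type*} [Fintype ι]
    [DecidableEq ι] (b : OrthonormalBasis ι 𝕜 E) {S : E →ₗ[𝕜] E}
    (hS : IsStrictlyPositive (LinearMap.toMatrixOrthonormal b S)) {x : E} (hx : x ≠ 0) :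
    0 < RCLike.re (inner 𝕜 x (S x)) := by
  obtain ⟨q, hq, hSq⟩ := CStarAlgebra.isStrictlyPositive_iff_eq_star_mul_self.mp hS
  obtain ⟨Q, rfl⟩ := EquivLike.surjective (LinearMap.toMatrixOrthonormal b) q
  rw [← map_star, ← map_mul, EquivLike.apply_eq_iff_eq] at hSq
  rw [hSq]
  exact re_inner_star_mul_self_pos ((isUnit_map_iff _ Q).mp hq) hx

open scoped MatrixOrder in
theorem exists_compatible_complex_structure_general (A : E →ₗ[𝕜] E)
    (hskew : ∀ x y : E, inner 𝕜 (A x) y = -inner 𝕜 x (A y))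
    (hbij : Function.Bijective A) :
    ∃ J : E →ₗ[𝕜] E,
      (J ∘ₗ J = -LinearMap.id) ∧
      (∀ x y : E, inner 𝕜 (J x) y = -inner 𝕜 x (J y)) ∧
      (∀ T : E →ₗ[𝕜] E, T ∘ₗ A = A ∘ₗ T → T ∘ₗ J = J ∘ₗ T) ∧
      (∀ x : E, x ≠ 0 → 0 < RCLike.re (inner 𝕜 (A x) (J x))) ∧
      (∀ s : ℝ, s ∈ Set.Icc (0 : ℝ) 1 →
        Function.Bijective ((s : 𝕜) • J + ((1 - s : ℝ) : 𝕜) • A)) := by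
  let b := stdOrthonormalBasis 𝕜 E
  let φ := LinearMap.toMatrixOrthonormal b
  obtain ⟨J, hJ⟩ := EquivLike.surjective φ (unitaryFactor (φ A))
  have h_unit : IsUnit (φ A) := ((Module.End.isUnit_iff A).mpr hbij).map φ
  have h_skew : φ A ∈ skewAdjoint _ :=
    (map_mem_skewAdjoint_iff φ).mpr (mem_skewAdjoint_iff_inner.mpr hskew)
  have h_pos (x : E) (hx : x ≠ 0) : 0 < RCLike.re (inner 𝕜 (A x) (J x)) := by
    have h : IsStrictlyPositive (φ (star A * J)) := by
      rw [map_mul, map_star, hJ]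
      exact isStrictlyPositive_star_mul_unitaryFactor h_unit
    rw [← LinearMap.adjoint_inner_right]
    exact re_inner_pos_of_isStrictlyPositive_toMatrixOrthonormal b h hx
  refine ⟨J, EquivLike.injective φ ?_, mem_skewAdjoint_iff_inner.mp ?_,
    fun T hT => EquivLike.injective φ ?_, h_pos, fun s hs => ?_⟩
  · change φ (J * J) = φ (-1)
    rw [map_mul, hJ, unitaryFactor_mul_self_of_mem_skewAdjoint h_skew h_unit, map_neg, map_one]
  · rw [← map_mem_skewAdjoint_iff φ, hJ]
    exact unitaryFactor_mem_skewAdjoint h_skew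
  · change φ (T * J) = φ (J * T)
    have h_comm : Commute (φ T) (φ A) := Commute.map hT φ
    rw [map_mul, map_mul, hJ]
    exact commute_unitaryFactor h_comm (skewAdjoint.mem_iff.mp h_skew ▸ h_comm.neg_right)
  · have h_inj := injective_segment_of_re_inner_pos h_pos hs
    exact ⟨h_inj, LinearMap.injective_iff_surjective.mp h_inj⟩

end Operators

/-- If `A` is a skew-adjoint bijective endomorphism of a finite-dimensional real
inner product space `E`, then there exists a linear complex structure `J` on `E`
which is skew-adjoint, commutes with every endomorphism commuting with `A`,
satisfies `⟪A x, J x⟫ > 0` for `x ≠ 0`, and such that `s • J + (1 - s) • A` is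
bijective for all `s ∈ [0, 1]`. -/
theorem exists_compatible_complex_structure
    (E : Type*) [NormedAddCommGroup E] [InnerProductSpace ℝ E] [FiniteDimensional ℝ E]
    (A : E →ₗ[ℝ] E)
    (hskew : ∀ x y : E, ⟪A x, y⟫ = -⟪x, A y⟫)
    (hbij : Function.Bijective A) :
    ∃ J : E →ₗ[ℝ] E,
      (J ∘ₗ J = -LinearMap.id) ∧
      (∀ x y : E, ⟪J x, y⟫ = -⟪x, J y⟫) ∧
      (∀ T : E →ₗ[ℝ] E, T ∘ₗ A = A ∘ₗ T → T ∘ₗ J = J ∘ₗ T) ∧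
      (∀ x : E, x ≠ 0 → 0 < ⟪A x, J x⟫) ∧
      (∀ s : ℝ, s ∈ Set.Icc (0 : ℝ) 1 →
        Function.Bijective (s • J + (1 - s) • A)) :=
  exists_compatible_complex_structure_general A hskew hbij
end

section
/- For every natural number n there exists v : Fin n → ℝ such that the one-parameter subgroup t ↦ ((t · v i) mod ℤ)_{i ∈ Fin n} of the torus (ℝ/ℤ)ⁿ has dense range; that is, the closure of the set {((t·v 1) mod ℤ, …, (t·v n) mod ℤ) : t ∈ ℝ} is the whole torus (ℝ/ℤ)ⁿ. -/
/-!
For every point `g` of the torus and every `w`, the `v` with `k v ≡ g` for some `k : ℕ` come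
arbitrarily close to `w`: subtract from `k w` a representative `r` of `k w - g` in a fundamental
box; then `v = w - r / k` has this property and tends to `w` as `k → ∞`. Hence for each nonempty
open `U` the `v` having a multiple in `U` form a dense open set, and by Baire's theorem a generic
`v` works for all `U` of a countable basis simultaneously, already with integer times `t = k`.
-/

open Bornology Filter Set TopologicalSpace
open scoped Topology

theorem eventually_residual_denseRange_of_dense_iUnion_preimage {ι X Y : Type*}
    [TopologicalSpace X] [TopologicalSpace Y] [SecondCountableTopology Y] {f : ι → X → Y}
    (hf : ∀ i, Continuous (f i))
    (hdense : ∀ U, IsOpen U → U.Nonempty → Dense (⋃ i, f i ⁻¹' U)) :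
    ∀ᶠ x in residual X, DenseRange fun i ↦ f i x := by
  have hmeets : ∀ᶠ x in residual X, ∀ U ∈ countableBasis Y, x ∈ ⋃ i, f i ⁻¹' U := by
    refine (eventually_countable_ball (countable_countableBasis Y)).2 fun U hU ↦ ?_
    have hU_open : IsOpen U := isOpen_of_mem_countableBasis hU
    exact residual_of_dense_open (isOpen_iUnion fun i ↦ hU_open.preimage (hf i))
      (hdense U hU_open (nonempty_of_mem_countableBasis hU))
  filter_upwards [hmeets] with x hx
  refine (isBasis_countableBasis Y).dense_iff.2 fun U hU _ ↦ ?_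
  obtain ⟨i, hi⟩ := mem_iUnion.1 (hx U hU)
  exact ⟨f i x, hi, i, rfl⟩

section BoundedFundamentalSet

variable {E G : Type*} [AddCommGroup E] [Module ℝ E] [TopologicalSpace E]
  [IsTopologicalAddGroup E] [AddGroup G] {π : E →+ G} {K : Set E}

theorem dense_setOf_exists_nsmul_eq (hK : IsVonNBounded ℝ K) (hπK : SurjOn π K univ) (g : G) :
    Dense {v | ∃ k : ℕ, k • π v = g} := by
  intro w
  have hrem (k : ℕ) : ∃ r ∈ K, π r = -g + k • π w := hπK (mem_univ _)
  choose r hrK hr using hrem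
  have hlim : Tendsto (fun k : ℕ ↦ w - (k : ℝ)⁻¹ • r k) atTop (𝓝 w) := by
    simpa using tendsto_const_nhds.sub
      (hK.smul_tendsto_zero (.of_forall hrK) (tendsto_inv_atTop_nhds_zero_nat (𝕜 := ℝ)))
  refine mem_closure_of_tendsto hlim ?_
  filter_upwards [eventually_ne_atTop 0] with k hk
  have hmul : k • (w - (k : ℝ)⁻¹ • r k) = k • w - r k := by
    rw [nsmul_sub, ← Nat.cast_smul_eq_nsmul ℝ k (_ • r k), smul_inv_smul₀ (Nat.cast_ne_zero.2 hk)]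
  refine ⟨k, ?_⟩
  calc k • π (w - (k : ℝ)⁻¹ • r k) = π (k • w - r k) := by rw [← map_nsmul, hmul]
    _ = k • π w - (-g + k • π w) := by rw [map_sub, map_nsmul, hr]
    _ = g := by rw [sub_eq_iff_eq_add, add_neg_cancel_left]

theorem eventually_residual_denseRange_nsmul [TopologicalSpace G] [SecondCountableTopology G]
    (hπ : Continuous π) (hK : IsVonNBounded ℝ K) (hπK : SurjOn π K univ) :
    ∀ᶠ v in residual E, DenseRange fun k : ℕ ↦ k • π v := by
  have hcont (k : ℕ) : Continuous fun v ↦ k • π v := by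
    simpa only [← map_nsmul, Function.comp_def] using hπ.comp (continuous_nsmul k)
  refine eventually_residual_denseRange_of_dense_iUnion_preimage hcont fun U _ ⟨g, hg⟩ ↦ ?_
  refine (dense_setOf_exists_nsmul_eq hK hπK g).mono ?_
  rintro v ⟨k, rfl⟩
  exact mem_iUnion.2 ⟨k, hg⟩

end BoundedFundamentalSet

theorem surjOn_pi_addCircle_coe_Icc {ι : Type*} (p : ι → ℝ) [∀ i, Fact (0 < p i)] :
    SurjOn (fun v i ↦ (v i : AddCircle (p i))) (Icc 0 p) univ := by
  intro x _
  have hlift (i : ι) : ∃ r ∈ Icc 0 (0 + p i), (r : AddCircle (p i)) = x i :=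
    (AddCircle.coe_image_Icc_eq (p i) 0).ge (mem_univ (x i))
  choose r hr hrx using hlift
  exact ⟨r, ⟨fun i ↦ (hr i).1, fun i ↦ (hr i).2.trans_eq (zero_add _)⟩, funext hrx⟩

theorem exists_dense_one_parameter_subgroup_general {ι : Type*} [Countable ι] (p : ι → ℝ)
    [∀ i, Fact (0 < p i)] :
    ∀ᶠ v in residual (ι → ℝ),
      DenseRange fun (k : ℕ) (i : ι) ↦ ((k * v i : ℝ) : AddCircle (p i)) := by
  let π : (ι → ℝ) →+ ∀ i, AddCircle (p i) := .piMap fun i ↦ QuotientAddGroup.mk' _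
  have hπ : Continuous π :=
    continuous_pi fun i ↦ (AddCircle.continuous_mk' (p i)).comp (continuous_apply i)
  have hbounded : IsVonNBounded ℝ (Icc 0 p) := isCompact_Icc.isVonNBounded ℝ
  filter_upwards [eventually_residual_denseRange_nsmul hπ hbounded (surjOn_pi_addCircle_coe_Icc p)]
    with v hv
  have hcoe (k : ℕ) : k • π v = fun i ↦ ((k * v i : ℝ) : AddCircle (p i)) := by
    rw [← map_nsmul, nsmul_eq_mul]
    rfl
  simpa only [hcoe] using hv

/-- For every `n` there is a vector `v ∈ ℝⁿ` whose associated one-parameter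
subgroup `t ↦ (t v₁, …, t vₙ) mod ℤⁿ` is dense in the torus `(ℝ/ℤ)ⁿ`. -/
theorem exists_dense_one_parameter_subgroup (n : ℕ) :
    ∃ v : Fin n → ℝ,
      DenseRange (fun t : ℝ => fun i : Fin n =>
        ((t * v i : ℝ) : AddCircle (1 : ℝ))) := by
  obtain ⟨v, hv⟩ :=
    (dense_of_mem_residual (exists_dense_one_parameter_subgroup_general fun _ : Fin n ↦ 1)).nonempty
  exact ⟨v, Dense.mono (range_subset_iff.2 fun k : ℕ ↦ ⟨k, rfl⟩) hv⟩
end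

section
/- Let E₁⁺, E₁⁻, E₂⁺, E₂⁻ be finite-dimensional complex inner product spaces and let a : E₁⁺ → E₁⁻ and b : E₂⁺ → E₂⁻ be ℂ-linear maps, with adjoints a† : E₁⁻ → E₁⁺ and b† : E₂⁻ → E₂⁺. Define the ℂ-linear map M : (E₁⁺ ⊗ E₂⁺) × (E₁⁻ ⊗ E₂⁻) → (E₁⁻ ⊗ E₂⁺) × (E₁⁺ ⊗ E₂⁻), where ⊗ denotes the tensor product over ℂ, by M(u, v) = ((a ⊗ id) u − (id ⊗ b†) v, (id ⊗ b) u + (a† ⊗ id) v). Then M is bijective if and only if a is bijective or b is bijective. -/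
open TensorProduct

/-!
Let `M(a, b)` be the external product of `a` and `b`. Since `a ⊗ id` and `id ⊗ b` commute, the cross
terms in `‖M(a, b) (u, v)‖²` cancel. Hence `M(a, b)` is injective exactly when `a ⊗ id`, `id ⊗ b`
have no common kernel and `a† ⊗ id`, `id ⊗ b†` have none, that is, when (`a` or `b` is injective)
and (`a†` or `b†` is injective). Up to exchanging summands, the adjoint of `M(a, b)` is `M(a, b†)`,
so `M(a, b)` is surjective exactly when (`a` or `b†` is injective) and (`a†` or `b` is injective).
By distributivity the four disjunctions together say that `a` and `a†` are injective or `b` and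
`b†` are, and a linear map is bijective exactly when it and its adjoint are injective.
-/

section Kernels

variable {K V V' W W' : Type*} [Field K] [AddCommGroup V] [Module K V] [AddCommGroup V']
  [Module K V'] [AddCommGroup W] [Module K W] [AddCommGroup W'] [Module K W']

theorem tmul_ne_zero_of_ne_zero {v : V} {w : W} (hv : v ≠ 0) (hw : w ≠ 0) : v ⊗ₜ[K] w ≠ 0 := by
  obtain ⟨f, hf⟩ : ∃ f : Module.Dual K V, f v ≠ 0 := by
    simpa only [ne_eq, not_forall] using mt (Module.forall_dual_apply_eq_zero_iff K v).1 hv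
  obtain ⟨g, hg⟩ : ∃ g : Module.Dual K W, g w ≠ 0 := by
    simpa only [ne_eq, not_forall] using mt (Module.forall_dual_apply_eq_zero_iff K w).1 hw
  intro h
  have hfg : f v * g w = 0 := by
    simpa using congrArg (fun t => TensorProduct.lid K K (TensorProduct.map f g t)) h
  exact mul_ne_zero hf hg hfg

theorem disjoint_ker_rTensor_ker_lTensor_iff (f : V →ₗ[K] V') (g : W →ₗ[K] W') :
    Disjoint (f.rTensor W).ker (g.lTensor V).ker ↔ Function.Injective f ∨ Function.Injective g := by
  constructor
  · intro hdisj
    simp only [injective_iff_map_eq_zero]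
    by_contra! ⟨⟨v, hfv, hv⟩, w, hgw, hw⟩
    refine tmul_ne_zero_of_ne_zero (K := K) hv hw (Submodule.disjoint_def.1 hdisj _ ?_ ?_)
    · simp [hfv]
    · simp [hgw]
  · rintro (hf | hg)
    · rw [LinearMap.ker_eq_bot.2 (Module.Flat.rTensor_preserves_injective_linearMap (M := W) f hf)]
      exact disjoint_bot_left
    · rw [LinearMap.ker_eq_bot.2 (Module.Flat.lTensor_preserves_injective_linearMap (M := V) g hg)]
      exact disjoint_bot_right

end Kernels

section Adjoint

variable {𝕜 E F : Type*} [RCLike 𝕜]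
  [NormedAddCommGroup E] [InnerProductSpace 𝕜 E] [FiniteDimensional 𝕜 E]
  [NormedAddCommGroup F] [InnerProductSpace 𝕜 F] [FiniteDimensional 𝕜 F]

theorem bijective_iff_injective_and_adjoint_injective (f : E →ₗ[𝕜] F) :
    Function.Bijective f ↔ Function.Injective f ∧ Function.Injective f.adjoint := by
  rw [Function.Bijective, ← LinearMap.range_eq_top, ← LinearMap.ker_eq_bot (f := f.adjoint),
    ← LinearMap.orthogonal_range, Submodule.orthogonal_eq_bot_iff]

end Adjoint

section ExternalProduct

variable {𝕜 E₁p E₁m E₂p E₂m : Type*} [RCLike 𝕜]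
  [NormedAddCommGroup E₁p] [InnerProductSpace 𝕜 E₁p] [FiniteDimensional 𝕜 E₁p]
  [NormedAddCommGroup E₁m] [InnerProductSpace 𝕜 E₁m] [FiniteDimensional 𝕜 E₁m]
  [NormedAddCommGroup E₂p] [InnerProductSpace 𝕜 E₂p] [FiniteDimensional 𝕜 E₂p]
  [NormedAddCommGroup E₂m] [InnerProductSpace 𝕜 E₂m] [FiniteDimensional 𝕜 E₂m]

/-- The external product of `a : E₁⁺ → E₁⁻` and `b : E₂⁺ → E₂⁻`, given by the block matrix
`((a ⊗ id, -id ⊗ b†), (id ⊗ b, a† ⊗ id))`. Direct sums are encoded as `WithLp 2` products, so that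
they are orthogonal and the external product has an adjoint. -/
noncomputable def externalProduct (a : E₁p →ₗ[𝕜] E₁m) (b : E₂p →ₗ[𝕜] E₂m) :
    WithLp 2 ((E₁p ⊗[𝕜] E₂p) × (E₁m ⊗[𝕜] E₂m)) →ₗ[𝕜]
      WithLp 2 ((E₁m ⊗[𝕜] E₂p) × (E₁p ⊗[𝕜] E₂m)) :=
  ((a.rTensor E₂p ∘ₗ .fst 𝕜 _ _ - b.adjoint.lTensor E₁m ∘ₗ .snd 𝕜 _ _).prod
    (b.lTensor E₁p ∘ₗ .fst 𝕜 _ _ + a.adjoint.rTensor E₂m ∘ₗ .snd 𝕜 _ _)).withLpMap 2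

theorem externalProduct_apply (a : E₁p →ₗ[𝕜] E₁m) (b : E₂p →ₗ[𝕜] E₂m)
    (x : WithLp 2 ((E₁p ⊗[𝕜] E₂p) × (E₁m ⊗[𝕜] E₂m))) :
    externalProduct a b x =
      .toLp 2 (a.rTensor E₂p x.fst - b.adjoint.lTensor E₁m x.snd,
        b.lTensor E₁p x.fst + a.adjoint.rTensor E₂m x.snd) :=
  rfl

theorem inner_rTensor_lTensor_adjoint (a : E₁p →ₗ[𝕜] E₁m) (b : E₂p →ₗ[𝕜] E₂m)
    (u : E₁p ⊗[𝕜] E₂p) (v : E₁m ⊗[𝕜] E₂m) :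
    inner 𝕜 (a.rTensor E₂p u) (b.adjoint.lTensor E₁m v) =
      inner 𝕜 (b.lTensor E₁p u) (a.adjoint.rTensor E₂m v) := by
  rw [← LinearMap.adjoint_lTensor, ← LinearMap.adjoint_rTensor, LinearMap.adjoint_inner_right,
    LinearMap.adjoint_inner_right, ← LinearMap.comp_apply, ← LinearMap.comp_apply,
    LinearMap.lTensor_comp_rTensor, LinearMap.rTensor_comp_lTensor]

theorem norm_sq_externalProduct (a : E₁p →ₗ[𝕜] E₁m) (b : E₂p →ₗ[𝕜] E₂m)
    (x : WithLp 2 ((E₁p ⊗[𝕜] E₂p) × (E₁m ⊗[𝕜] E₂m))) :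
    ‖externalProduct a b x‖ ^ 2 =
      (‖a.rTensor E₂p x.fst‖ ^ 2 + ‖b.lTensor E₁p x.fst‖ ^ 2) +
        (‖a.adjoint.rTensor E₂m x.snd‖ ^ 2 + ‖b.adjoint.lTensor E₁m x.snd‖ ^ 2) := by
  simp only [externalProduct_apply, WithLp.prod_norm_sq_eq_of_L2, WithLp.toLp_fst, WithLp.toLp_snd]
  rw [norm_sub_sq (𝕜 := 𝕜), norm_add_sq (𝕜 := 𝕜), inner_rTensor_lTensor_adjoint]
  ring

theorem externalProduct_apply_eq_zero_iff (a : E₁p →ₗ[𝕜] E₁m) (b : E₂p →ₗ[𝕜] E₂m)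
    (x : WithLp 2 ((E₁p ⊗[𝕜] E₂p) × (E₁m ⊗[𝕜] E₂m))) :
    externalProduct a b x = 0 ↔
      x.fst ∈ (a.rTensor E₂p).ker ⊓ (b.lTensor E₁p).ker ∧
        x.snd ∈ (a.adjoint.rTensor E₂m).ker ⊓ (b.adjoint.lTensor E₁m).ker := by
  rw [← norm_eq_zero, ← sq_eq_zero_iff, norm_sq_externalProduct,
    add_eq_zero_iff_of_nonneg (by positivity) (by positivity),
    add_eq_zero_iff_of_nonneg (by positivity) (by positivity),
    add_eq_zero_iff_of_nonneg (by positivity) (by positivity)]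
  simp only [sq_eq_zero_iff, norm_eq_zero, Submodule.mem_inf, LinearMap.mem_ker]

theorem externalProduct_injective_iff (a : E₁p →ₗ[𝕜] E₁m) (b : E₂p →ₗ[𝕜] E₂m) :
    Function.Injective (externalProduct a b) ↔
      (Function.Injective a ∨ Function.Injective b) ∧
        (Function.Injective a.adjoint ∨ Function.Injective b.adjoint) := by
  rw [← disjoint_ker_rTensor_ker_lTensor_iff, ← disjoint_ker_rTensor_ker_lTensor_iff,
    injective_iff_map_eq_zero]
  simp only [externalProduct_apply_eq_zero_iff, disjoint_iff, Submodule.eq_bot_iff]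
  constructor
  · intro h
    exact ⟨fun u hu => congrArg WithLp.fst (h (.toLp 2 (u, 0)) ⟨hu, zero_mem _⟩),
      fun v hv => congrArg WithLp.snd (h (.toLp 2 (0, v)) ⟨zero_mem _, hv⟩)⟩
  · rintro ⟨hfst, hsnd⟩ x ⟨hu, hv⟩
    exact WithLp.ofLp_injective 2 (Prod.ext (hfst _ hu) (hsnd _ hv))

theorem adjoint_externalProduct (a : E₁p →ₗ[𝕜] E₁m) (b : E₂p →ₗ[𝕜] E₂m) :
    (externalProduct a b).adjoint =
      (LinearIsometryEquiv.withLpProdComm 2 𝕜 (E₁m ⊗[𝕜] E₂m) (E₁p ⊗[𝕜] E₂p)).toLinearMap ∘ₗ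
        externalProduct a b.adjoint ∘ₗ
          (LinearIsometryEquiv.withLpProdComm 2 𝕜 (E₁m ⊗[𝕜] E₂p) (E₁p ⊗[𝕜] E₂m)).toLinearMap := by
  refine ((LinearMap.eq_adjoint_iff _ _).2 fun y x => ?_).symm
  simp only [LinearMap.coe_comp, LinearEquiv.coe_coe, LinearIsometryEquiv.coe_toLinearEquiv,
    Function.comp_apply, LinearIsometryEquiv.withLpProdComm_apply, externalProduct_apply,
    WithLp.toLp_fst, WithLp.toLp_snd, WithLp.ofLp_fst, WithLp.ofLp_snd, WithLp.prod_inner_apply,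
    ← LinearMap.adjoint_lTensor, ← LinearMap.adjoint_rTensor, LinearMap.adjoint_adjoint,
    LinearMap.adjoint_inner_left, LinearMap.adjoint_inner_right, inner_add_left, inner_sub_left,
    inner_add_right, inner_sub_right]
  ring

theorem adjoint_externalProduct_injective_iff (a : E₁p →ₗ[𝕜] E₁m) (b : E₂p →ₗ[𝕜] E₂m) :
    Function.Injective (externalProduct a b).adjoint ↔
      Function.Injective (externalProduct a b.adjoint) := by
  rw [adjoint_externalProduct]
  simp

theorem externalProduct_bijective_iff (a : E₁p →ₗ[𝕜] E₁m) (b : E₂p →ₗ[𝕜] E₂m) :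
    Function.Bijective (externalProduct a b) ↔ Function.Bijective a ∨ Function.Bijective b := by
  simp only [bijective_iff_injective_and_adjoint_injective, adjoint_externalProduct_injective_iff,
    externalProduct_injective_iff, LinearMap.adjoint_adjoint]
  tauto

end ExternalProduct

theorem external_product_bijective_iff_general
    {𝕜 E₁p E₁m E₂p E₂m : Type*} [RCLike 𝕜]
    [NormedAddCommGroup E₁p] [InnerProductSpace 𝕜 E₁p] [FiniteDimensional 𝕜 E₁p]
    [NormedAddCommGroup E₁m] [InnerProductSpace 𝕜 E₁m] [FiniteDimensional 𝕜 E₁m]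
    [NormedAddCommGroup E₂p] [InnerProductSpace 𝕜 E₂p] [FiniteDimensional 𝕜 E₂p]
    [NormedAddCommGroup E₂m] [InnerProductSpace 𝕜 E₂m] [FiniteDimensional 𝕜 E₂m]
    (a : E₁p →ₗ[𝕜] E₁m) (b : E₂p →ₗ[𝕜] E₂m) :
    Function.Bijective
      (fun p : (E₁p ⊗[𝕜] E₂p) × (E₁m ⊗[𝕜] E₂m) =>
        ((TensorProduct.map a LinearMap.id) p.1
            - (TensorProduct.map LinearMap.id (LinearMap.adjoint b)) p.2,
         (TensorProduct.map LinearMap.id b) p.1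
            + (TensorProduct.map (LinearMap.adjoint a) LinearMap.id) p.2))
      ↔ (Function.Bijective a ∨ Function.Bijective b) :=
  -- `externalProduct a b` is by definition this map conjugated by `WithLp.toLp 2`.
  ((WithLp.linearEquiv 2 𝕜 _).symm.comp_bijective _).symm.trans <|
    ((WithLp.linearEquiv 2 𝕜 _).bijective_comp _).symm.trans <| externalProduct_bijective_iff a b

/-- The external-product morphism
`M(u, v) = ((a ⊗ id) u − (id ⊗ b†) v, (id ⊗ b) u + (a† ⊗ id) v)`
between `(E₁⁺ ⊗ E₂⁺) × (E₁⁻ ⊗ E₂⁻)` and `(E₁⁻ ⊗ E₂⁺) × (E₁⁺ ⊗ E₂⁻)` is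
bijective if and only if `a` is bijective or `b` is bijective. -/
theorem external_product_bijective_iff
    (E₁p E₁m E₂p E₂m : Type*)
    [NormedAddCommGroup E₁p] [InnerProductSpace ℂ E₁p] [FiniteDimensional ℂ E₁p]
    [NormedAddCommGroup E₁m] [InnerProductSpace ℂ E₁m] [FiniteDimensional ℂ E₁m]
    [NormedAddCommGroup E₂p] [InnerProductSpace ℂ E₂p] [FiniteDimensional ℂ E₂p]
    [NormedAddCommGroup E₂m] [InnerProductSpace ℂ E₂m] [FiniteDimensional ℂ E₂m]
    (a : E₁p →ₗ[ℂ] E₁m) (b : E₂p →ₗ[ℂ] E₂m) :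
    Function.Bijective
      (fun p : (E₁p ⊗[ℂ] E₂p) × (E₁m ⊗[ℂ] E₂m) =>
        ((TensorProduct.map a LinearMap.id) p.1
            - (TensorProduct.map LinearMap.id (LinearMap.adjoint b)) p.2,
         (TensorProduct.map LinearMap.id b) p.1
            + (TensorProduct.map (LinearMap.adjoint a) LinearMap.id) p.2))
      ↔ (Function.Bijective a ∨ Function.Bijective b) :=
  external_product_bijective_iff_general a b
end

section
/- Let Λ be an abelian group, β : Λ → ℝ an additive group homomorphism, N a natural number, and α : Fin N → Λ a family of elements with β(α i) ≠ 0 for every i. Let M = {i : β(α i) < 0}, define α' i = α i when β(α i) > 0 and α' i = −(α i) when β(α i) < 0, and set ρ = Σ_{i ∈ M} α' i. Then: (a) for every λ ∈ Λ the set {k : Fin N → ℕ | Σ_i (k i) • (α' i) = λ} is finite; (b) defining Q : Λ → ℤ by Q(λ) = (−1)^{card M} · card {k : Fin N → ℕ | Σ_i (k i) • (α' i) = λ − ρ}, one has for every λ ∈ Λ: Σ_{S ⊆ Fin N} (−1)^{card S} · Q(λ − Σ_{i ∈ S} α i) equals 1 if λ = 0 and equals 0 otherwise. -/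
open Classical

/-!
As generalized characters, `1 - e^α = -e^α (1 - e^{-α})`. Replacing every weight on which `β` is
negative by its opposite therefore turns `∏ i, (1 - e^{α i})` into `(-1)^|M| e^{-ρ}` times the same
product over the polarized weights; on index sets of the expanded product this is the substitution
`S ↦ S ∆ M`. All polarized weights lie in the open half-space `0 < β`, so each `l` has finitely many
expressions `l = ∑ i, k i • α' i`. Each of them is counted in the convolution once, with sign
`(-1)^|T|`, for every `T` contained in the support of `k`, and the signs cancel unless `k = 0`.
-/

open scoped symmDiff

section SymmDiff

variable {ι R : Type*} [CommMonoid R]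

@[to_additive]
theorem prod_symmDiff_eq_mul {f g : ι → R} {M : Finset ι} (hM : ∀ i ∈ M, f i * g i = 1)
    (hMc : ∀ i ∉ M, f i = g i) (S : Finset ι) :
    ∏ i ∈ S ∆ M, f i = (∏ i ∈ S, g i) * ∏ i ∈ M, f i := by
  have cancel : (∏ i ∈ S ∩ M, g i) * ∏ i ∈ M ∩ S, f i = 1 := by
    rw [Finset.inter_comm M S, ← Finset.prod_mul_distrib]
    exact Finset.prod_eq_one fun i hi => by rw [mul_comm, hM i (Finset.mem_inter.mp hi).2]
  have agree : ∏ i ∈ S \ M, f i = ∏ i ∈ S \ M, g i :=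
    Finset.prod_congr rfl fun i hi => hMc i (Finset.mem_sdiff.mp hi).2
  calc ∏ i ∈ S ∆ M, f i
      = (∏ i ∈ S \ M, g i) * ∏ i ∈ M \ S, f i := by
        rw [Finset.symmDiff_def, Finset.prod_union disjoint_sdiff_sdiff, agree]
    _ = ((∏ i ∈ S ∩ M, g i) * ∏ i ∈ M ∩ S, f i) *
          ((∏ i ∈ S \ M, g i) * ∏ i ∈ M \ S, f i) := by rw [cancel, one_mul]
    _ = (∏ i ∈ S, g i) * ∏ i ∈ M, f i := by
        rw [mul_mul_mul_comm, Finset.prod_inter_mul_prod_sdiff, Finset.prod_inter_mul_prod_sdiff]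

theorem neg_one_pow_card_symmDiff {A : Type*} [CommMonoid A] [HasDistribNeg A] (S M : Finset ι) :
    (-1 : A) ^ (S ∆ M).card = (-1) ^ S.card * (-1) ^ M.card := by
  simpa only [Finset.prod_const] using
    prod_symmDiff_eq_mul (f := fun _ => (-1 : A)) (g := fun _ => -1) (M := M) (by simp) (by simp) S

end SymmDiff

section VectorPartitions

variable {ι Λ : Type*} [Fintype ι]

/-- The vector partitions of `l` with parts `a i`. Their number is the coefficient of `e^l` in the
formal expansion of `∏ i, (1 - e^{a i})⁻¹`, the character of the symmetric algebra on a module with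
weights `a i`. -/
def vectorPartitions [AddCommMonoid Λ] (a : ι → Λ) (l : Λ) : Set (ι → ℕ) :=
  {k | ∑ i, k i • a i = l}

theorem finite_vectorPartitions {Γ : Type*} [AddCommMonoid Λ] [AddCommMonoid Γ] [PartialOrder Γ]
    [IsOrderedCancelAddMonoid Γ] [Archimedean Γ] (β : Λ →+ Γ) {a : ι → Λ}
    (ha : ∀ i, 0 < β (a i)) (l : Λ) : (vectorPartitions a l).Finite := by
  choose n hn using fun i => Archimedean.arch (β l) (ha i)
  refine (Set.finite_Iic n).subset fun k hk i => ?_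
  have le_bound : k i • β (a i) ≤ n i • β (a i) :=
    calc k i • β (a i)
        ≤ ∑ j, k j • β (a j) :=
          Finset.single_le_sum (f := fun j => k j • β (a j))
            (fun j _ => nsmul_nonneg (ha j).le (k j)) (Finset.mem_univ i)
      _ = β (∑ j, k j • a j) := by simp only [map_sum, map_nsmul]
      _ = β l := congrArg β hk
      _ ≤ n i • β (a i) := hn i
  exact (nsmul_left_strictMono (ha i)).le_iff_le.mp le_bound

theorem image_add_right_vectorPartitions [AddCommMonoid Λ] [IsRightCancelAdd Λ] (a : ι → Λ)
    (c : ι → ℕ) (l : Λ) :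
    (· + c) '' vectorPartitions a l = vectorPartitions a (l + ∑ i, c i • a i) ∩ Set.Ici c := by
  have mem_add_iff (k : ι → ℕ) :
      k + c ∈ vectorPartitions a (l + ∑ i, c i • a i) ↔ k ∈ vectorPartitions a l := by
    simp only [vectorPartitions, Set.mem_ofPred_eq, Pi.add_apply, add_nsmul,
      Finset.sum_add_distrib, add_left_inj]
  ext k
  constructor
  · rintro ⟨k, hk, rfl⟩
    exact ⟨(mem_add_iff k).mpr hk, Set.mem_Ici.mpr (le_add_of_nonneg_left zero_le)⟩
  · rintro ⟨hk, hck⟩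
    refine ⟨k - c, ?_, tsub_add_cancel_of_le hck⟩
    rwa [← mem_add_iff, tsub_add_cancel_of_le hck]

theorem ncard_vectorPartitions_sub_sum [AddCommGroup Λ] (a : ι → Λ) (l : Λ) (T : Finset ι) :
    (vectorPartitions a (l - ∑ i ∈ T, a i)).ncard =
      (vectorPartitions a l ∩ {k | ∀ i ∈ T, k i ≠ 0}).ncard := by
  let c : ι → ℕ := fun i => if i ∈ T then 1 else 0
  have sum_c : ∑ i, c i • a i = ∑ i ∈ T, a i := by simp [c, ite_smul]
  have Ici_c : Set.Ici c = {k | ∀ i ∈ T, k i ≠ 0} := by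
    ext k
    refine forall_congr' fun i => ?_
    by_cases hi : i ∈ T <;> simp [c, hi, Nat.one_le_iff_ne_zero]
  rw [← Set.ncard_image_of_injective _ (add_left_injective c), image_add_right_vectorPartitions,
    sum_c, sub_add_cancel, Ici_c]

theorem sum_neg_one_pow_card_of_forall_ne_zero {A : Type*} [Zero A] [DecidableEq A]
    (k : ι → A) :
    (∑ T : Finset ι, if ∀ i ∈ T, k i ≠ 0 then (-1 : ℤ) ^ T.card else 0) =
      if k = 0 then 1 else 0 := by
  let supp : Finset ι := Finset.univ.filter fun i => k i ≠ 0
  have subsets_supp :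
      (Finset.univ.filter fun T : Finset ι => ∀ i ∈ T, k i ≠ 0) = supp.powerset := by
    ext T
    simp [supp, Finset.subset_iff]
  have supp_eq_empty : supp = ∅ ↔ k = 0 := by
    simp [supp, Finset.filter_eq_empty_iff, funext_iff]
  rw [← Finset.sum_filter, subsets_supp, Finset.sum_powerset_neg_one_pow_card]
  simp only [supp_eq_empty]

end VectorPartitions

section ExteriorConvolution

variable {ι Λ : Type*} [Fintype ι] [AddCommGroup Λ]

/-- The product `∏ i, (1 - e^{a i}) ⊗ F` of the alternating sum of the exterior powers of a module
with weights `a i` and the generalized character with coefficient function `F`. -/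
def exteriorConvolution (a : ι → Λ) (F : Λ → ℤ) (l : Λ) : ℤ :=
  ∑ S : Finset ι, (-1) ^ S.card * F (l - ∑ i ∈ S, a i)

theorem exteriorConvolution_ncard_vectorPartitions (a : ι → Λ) {l : Λ}
    (hfin : (vectorPartitions a l).Finite) :
    exteriorConvolution a (fun m => ((vectorPartitions a m).ncard : ℤ)) l =
      if l = 0 then 1 else 0 := by
  have ncard_eq (T : Finset ι) : (vectorPartitions a (l - ∑ i ∈ T, a i)).ncard =
      (hfin.toFinset.filter fun k => ∀ i ∈ T, k i ≠ 0).card := by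
    rw [ncard_vectorPartitions_sub_sum, ← Set.ncard_coe_finset, Finset.coe_filter]
    simp only [Set.Finite.mem_toFinset]
    rfl
  have zero_mem : 0 ∈ vectorPartitions a l ↔ l = 0 := by
    simp [vectorPartitions, eq_comm]
  calc exteriorConvolution a (fun m => ((vectorPartitions a m).ncard : ℤ)) l
      = ∑ T : Finset ι, ∑ k ∈ hfin.toFinset,
          if ∀ i ∈ T, k i ≠ 0 then (-1 : ℤ) ^ T.card else 0 := by
        refine Finset.sum_congr rfl fun T _ => ?_
        beta_reduce
        rw [ncard_eq, ← Finset.sum_filter, Finset.sum_const, nsmul_eq_mul, mul_comm]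
    _ = ∑ k ∈ hfin.toFinset, if k = 0 then 1 else 0 := by
        rw [Finset.sum_comm]
        exact Finset.sum_congr rfl fun k _ => sum_neg_one_pow_card_of_forall_ne_zero k
    _ = if l = 0 then 1 else 0 := by
        simp only [Finset.sum_ite_eq', Set.Finite.mem_toFinset, zero_mem]

theorem exteriorConvolution_eq_of_neg_on {a b : ι → Λ} {M : Finset ι}
    (hM : ∀ i ∈ M, b i = -a i) (hMc : ∀ i ∉ M, b i = a i) (F : Λ → ℤ) (l : Λ) :
    exteriorConvolution a F l =
      (-1) ^ M.card * exteriorConvolution b F (l + ∑ i ∈ M, b i) := by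
  rw [exteriorConvolution, exteriorConvolution, Finset.mul_sum]
  refine Fintype.sum_equiv (symmDiff_left_involutive M).toPerm _ _ fun S => ?_
  have sum_b : ∑ i ∈ S ∆ M, b i = ∑ i ∈ S, a i + ∑ i ∈ M, b i :=
    sum_symmDiff_eq_add (fun i hi => by rw [hM i hi, neg_add_cancel]) hMc S
  have sign : (-1 : ℤ) ^ M.card * (-1) ^ (S ∆ M).card = (-1) ^ S.card := by
    rw [neg_one_pow_card_symmDiff, mul_left_comm, ← pow_add, Even.neg_one_pow ⟨_, rfl⟩, mul_one]
  change _ = (-1) ^ M.card * ((-1) ^ (S ∆ M).card * F (l + ∑ i ∈ M, b i - ∑ i ∈ S ∆ M, b i))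
  rw [← mul_assoc, sign, sum_b, add_sub_add_right_eq_sub]

theorem exteriorConvolution_const_mul_shift (a : ι → Λ) (F : Λ → ℤ) (c : ℤ) (r l : Λ) :
    exteriorConvolution a (fun m => c * F (m - r)) l = c * exteriorConvolution a F (l - r) := by
  simp only [exteriorConvolution, Finset.mul_sum, mul_left_comm c, sub_right_comm]

end ExteriorConvolution

section Polarization

variable {ι Λ Γ : Type*} [AddCommGroup Λ] [AddCommGroup Γ] [LinearOrder Γ]

/-- The weights of `|W|^γ`: every weight on which `β` is negative is replaced by its opposite. -/
def polarizedWeight (β : Λ →+ Γ) (α : ι → Λ) (i : ι) : Λ :=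
  if 0 < β (α i) then α i else -(α i)

theorem map_polarizedWeight_pos [IsOrderedAddMonoid Γ] {β : Λ →+ Γ} {α : ι → Λ}
    {i : ι} (hβ : β (α i) ≠ 0) : 0 < β (polarizedWeight β α i) := by
  unfold polarizedWeight
  split_ifs with hpos
  · exact hpos
  · rw [map_neg]
    exact neg_pos.mpr (lt_of_le_of_ne (not_lt.mp hpos) hβ)

variable [Fintype ι]

/-- The indices of the weights that polarization replaces by their opposites. They index the weights
of `W^{-,γ}`. -/
def negativeIndices (β : Λ →+ Γ) (α : ι → Λ) : Finset ι :=
  Finset.univ.filter fun i => β (α i) < 0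

/-- The coefficient function of the polarized inverse
`[∧•W]^{-1}_γ = (-1)^{dim W^{-,γ}} det(W^{-,γ}) ⊗ S•(|W|^γ)`. Tensoring with the determinant shifts
the argument by the sum of the polarized weights over `negativeIndices β α`. The count is junk (`0`)
for an infinite set of vector partitions. -/
noncomputable def polarizedInverse (β : Λ →+ Γ) (α : ι → Λ) (l : Λ) : ℤ :=
  (-1) ^ (negativeIndices β α).card *
    ((vectorPartitions (polarizedWeight β α)
      (l - ∑ i ∈ negativeIndices β α, polarizedWeight β α i)).ncard : ℤ)

theorem exteriorConvolution_polarizedInverse {β : Λ →+ Γ} {α : ι → Λ} (hβ : ∀ i, β (α i) ≠ 0)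
    {l : Λ} (hfin : (vectorPartitions (polarizedWeight β α) l).Finite) :
    exteriorConvolution α (polarizedInverse β α) l = if l = 0 then 1 else 0 := by
  set M := negativeIndices β α with hM
  have mem_M {i : ι} : i ∈ M ↔ β (α i) < 0 := by simp [hM, negativeIndices]
  have neg_on_M : ∀ i ∈ M, polarizedWeight β α i = -α i := fun i hi =>
    if_neg (mem_M.mp hi).not_gt
  have eq_off_M : ∀ i ∉ M, polarizedWeight β α i = α i := fun i hi =>
    if_pos (lt_of_le_of_ne (not_lt.mp (mem_M.not.mp hi)) (hβ i).symm)
  unfold polarizedInverse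
  rw [exteriorConvolution_eq_of_neg_on neg_on_M eq_off_M,
    exteriorConvolution_const_mul_shift (polarizedWeight β α)
      (fun m => ((vectorPartitions (polarizedWeight β α) m).ncard : ℤ)),
    add_sub_cancel_right, exteriorConvolution_ncard_vectorPartitions _ hfin, ← mul_assoc,
    ← pow_add, Even.neg_one_pow ⟨_, rfl⟩, one_mul]

theorem polarized_inverse_identity_general [IsOrderedAddMonoid Γ] [Archimedean Γ]
    (β : Λ →+ Γ) (α : ι → Λ) (hβ : ∀ i, β (α i) ≠ 0) :
    (∀ l, (vectorPartitions (polarizedWeight β α) l).Finite) ∧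
      ∀ l, exteriorConvolution α (polarizedInverse β α) l = if l = 0 then 1 else 0 :=
  have hfin := finite_vectorPartitions β fun i => map_polarizedWeight_pos (hβ i)
  ⟨hfin, fun l => exteriorConvolution_polarizedInverse hβ (hfin l)⟩

end Polarization

/-- The polarized inverse of `∧•W`. Let `Λ` be an abelian group, `β : Λ → ℝ` a
homomorphism, and `α : Fin N → Λ` weights with `β (α i) ≠ 0`. With
`M = {i | β (α i) < 0}`, `α' i = α i` if `β (α i) > 0` and `α' i = -(α i)`
otherwise, and `ρ = Σ_{i ∈ M} α' i`:
(a) for every `λ` there are finitely many `k : Fin N → ℕ` with `Σ k i • α' i = λ`;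
(b) the function `Q λ = (-1)^|M| · #{k | Σ k i • α' i = λ - ρ}` satisfies the
convolution identity `Σ_{S ⊆ Fin N} (-1)^|S| Q (λ - Σ_{i ∈ S} α i) = δ_{λ,0}`. -/
theorem polarized_inverse_identity
    (Λ : Type*) [AddCommGroup Λ] (β : Λ →+ ℝ) (N : ℕ) (α : Fin N → Λ)
    (hβ : ∀ i, β (α i) ≠ 0)
    (M : Finset (Fin N)) (hM : M = Finset.univ.filter fun i => β (α i) < 0)
    (α' : Fin N → Λ) (hα' : ∀ i, α' i = if 0 < β (α i) then α i else -(α i))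
    (ρ : Λ) (hρ : ρ = ∑ i ∈ M, α' i)
    (Q : Λ → ℤ)
    (hQ : ∀ l : Λ, Q l = (-1) ^ (M.card) *
      (Nat.card {k : Fin N → ℕ // ∑ i, (k i) • (α' i) = l - ρ} : ℤ)) :
    (∀ l : Λ, {k : Fin N → ℕ | ∑ i, (k i) • (α' i) = l}.Finite) ∧
    (∀ l : Λ,
      (∑ S : Finset (Fin N), (-1) ^ (S.card) * Q (l - ∑ i ∈ S, α i)) =
        if l = 0 then 1 else 0) := by
  obtain rfl : α' = polarizedWeight β α := funext hα'
  subst hM hρ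
  obtain rfl : Q = polarizedInverse β α := funext hQ
  exact polarized_inverse_identity_general β α hβ
end

section
/- Let E be a real inner product space, let b, ξ ∈ E, and let s ∈ ℝ. Then the equality (s² + ‖ξ − b‖²) · (s² + ‖ξ + b‖²) = 4 s² ‖b‖² holds if and only if ξ is a real scalar multiple of b (∃ t ∈ ℝ, ξ = t • b) and s² + ‖ξ‖² = ‖b‖². -/
open scoped RealInnerProductSpace

/-!
Up to the term `4 * s ^ 2 * ‖b‖ ^ 2`, the product is the sum of a square and four times the Gram
determinant of `ξ` and `b`. Both are nonnegative, so the equality forces the square to vanish and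
equality to hold in the Cauchy–Schwarz inequality.
-/

section Seminormed

variable {E : Type*} [SeminormedAddCommGroup E] [InnerProductSpace ℝ E]

theorem add_norm_sub_sq_mul_add_norm_add_sq (x y : E) (c : ℝ) :
    (c + ‖x - y‖ ^ 2) * (c + ‖x + y‖ ^ 2) =
      (c + ‖x‖ ^ 2 - ‖y‖ ^ 2) ^ 2 + 4 * ((‖x‖ * ‖y‖) ^ 2 - ⟪x, y⟫ ^ 2) + 4 * c * ‖y‖ ^ 2 := by
  rw [norm_sub_sq_real, norm_add_sq_real]
  ring

theorem real_inner_sq_le_norm_mul_norm_sq (x y : E) : ⟪x, y⟫ ^ 2 ≤ (‖x‖ * ‖y‖) ^ 2 :=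
  sq_le_sq.mpr ((abs_real_inner_le_norm x y).trans (le_abs_self _))

theorem real_inner_sq_eq_norm_mul_norm_sq_iff (x y : E) :
    ⟪x, y⟫ ^ 2 = (‖x‖ * ‖y‖) ^ 2 ↔ |⟪x, y⟫| = ‖x‖ * ‖y‖ := by
  rw [sq_eq_sq_iff_abs_eq_abs, abs_of_nonneg (by positivity : 0 ≤ ‖x‖ * ‖y‖)]

theorem add_norm_sub_sq_mul_add_norm_add_sq_eq_iff (x y : E) (c : ℝ) :
    (c + ‖x - y‖ ^ 2) * (c + ‖x + y‖ ^ 2) = 4 * c * ‖y‖ ^ 2 ↔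
      |⟪x, y⟫| = ‖x‖ * ‖y‖ ∧ c + ‖x‖ ^ 2 = ‖y‖ ^ 2 := by
  have gram_nonneg : 0 ≤ 4 * ((‖x‖ * ‖y‖) ^ 2 - ⟪x, y⟫ ^ 2) :=
    mul_nonneg zero_le_four (sub_nonneg.mpr (real_inner_sq_le_norm_mul_norm_sq x y))
  rw [add_norm_sub_sq_mul_add_norm_add_sq, add_eq_right,
    add_eq_zero_iff_of_nonneg (sq_nonneg _) gram_nonneg, sq_eq_zero_iff, sub_eq_zero,
    mul_eq_zero_iff_left four_ne_zero, sub_eq_zero, eq_comm (a := (‖x‖ * ‖y‖) ^ 2),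
    real_inner_sq_eq_norm_mul_norm_sq_iff, and_comm]

end Seminormed

theorem norm_inner_eq_norm_mul_norm_iff_exists_smul {𝕜 E : Type*} [RCLike 𝕜]
    [NormedAddCommGroup E] [InnerProductSpace 𝕜 E] {x y : E} (hxy : y = 0 → x = 0) :
    ‖inner 𝕜 x y‖ = ‖x‖ * ‖y‖ ↔ ∃ r : 𝕜, x = r • y := by
  have cauchySchwarz_eq : ‖inner 𝕜 y x‖ = ‖y‖ * ‖x‖ ↔ y = 0 ∨ ∃ r : 𝕜, x = r • y :=
    (norm_inner_eq_norm_tfae 𝕜 y x).out 0 2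
  rw [norm_inner_symm, mul_comm, cauchySchwarz_eq]
  exact or_iff_right_of_imp fun hy ↦ ⟨0, by rw [hxy hy, zero_smul]⟩

/-- The determinant computation for the pushed Thom symbol: in a real inner
product space, `(s² + ‖ξ − b‖²)(s² + ‖ξ + b‖²) = 4 s² ‖b‖²` holds if and only if
`ξ` is a real multiple of `b` and `s² + ‖ξ‖² = ‖b‖²`. -/
theorem det_eq_zero_iff
    (E : Type*) [NormedAddCommGroup E] [InnerProductSpace ℝ E]
    (b ξ : E) (s : ℝ) :
    (s ^ 2 + ‖ξ - b‖ ^ 2) * (s ^ 2 + ‖ξ + b‖ ^ 2) = 4 * s ^ 2 * ‖b‖ ^ 2 ↔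
      (∃ t : ℝ, ξ = t • b) ∧ s ^ 2 + ‖ξ‖ ^ 2 = ‖b‖ ^ 2 := by
  rw [add_norm_sub_sq_mul_add_norm_add_sq_eq_iff, ← Real.norm_eq_abs]
  refine and_congr_left fun h ↦ norm_inner_eq_norm_mul_norm_iff_exists_smul ?_
  have norm_le : ‖ξ‖ ≤ ‖b‖ :=
    (sq_le_sq₀ (norm_nonneg ξ) (norm_nonneg b)).mp (h ▸ le_add_of_nonneg_left (sq_nonneg s))
  rintro rfl
  rwa [norm_zero, norm_le_zero_iff] at norm_le
end
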